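/- arXiv:1312.2170 — 2 statements merged into one kernel-verified Lean document; each statement's English description precedes it below -/
import Mathlib

section
/- Let n ≥ 3, let ω = s_{i_1} s_{i_2} ⋯ s_{i_k} be a reduced subword of Ω_n, and let σ ∈ S_n be the permutation represented by ω. If σ s_{n−1} ≤ v_n in the Bruhat order and s_{n−1} ∉ D_R(σ), then there exists a reduced expression ω′ of σ s_{n−1} such that ω′ is a subword of Ω_n and d(ω′) = d(ω). -/
/-!
The Bruhat hypothesis is used only through one consequence: `v_n` sends every position `≥ n` to a
value `≥ 2`, and a lower bound `g a ≤ v a` by a monotone `g` is inherited by everything below `v`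
(`lower_bound_of_sublist`). Hence `(σ s_{n-1})(n) ≠ 1`, i.e. `σ(n-1) ≠ 1`.

With this in place of the Bruhat condition, the claim is proved by induction on `n`
(`exists_word`), starting from `n = 2`, where `Ω_2` is empty and `σ(1) = 1`. Since
`Ω_n = Ω_{n-1} s_{n-1} s_{n-2}`, write `ω` as `α` followed by a subword of `s_{n-1} s_{n-2}`, with
`α` a subword of `Ω_{n-1}`.
* If `ω = α`, take `ω' = α s_{n-1}`.
* If `ω = α s_{n-2}`, induction rewrites `α s_{n-2}` as a subword `α'` of `Ω_{n-1}`; take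
  `ω' = α' s_{n-1}`.
* If `ω = α s_{n-1}`, then `s_{n-1}` is a descent of `σ`, which is excluded.
* If `ω = α s_{n-1} s_{n-2}`, then `σ s_{n-1} = α s_{n-2} s_{n-1} s_{n-2}` by the braid relation;
  with `α'` as before take `ω' = α' s_{n-1} s_{n-2}`.
In the two inductive cases `σ(n-1) = α(n-2)`, so the condition on `σ` passes to `α`.

Reducedness is controlled by the exchange property (`exchange`), which relates descents of
one-line notation to `len`.
-/

/-- The simple transposition `s i = (i, i+1)` acting on `ℕ` (1-based positions);
multiplying a permutation on the right by `st i` swaps the entries in positions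
`i` and `i+1` of its one-line notation. -/
def st (i : ℕ) : Equiv.Perm ℕ := Equiv.swap i (i + 1)

/-- The permutation represented by a word, i.e. a list `[i₁, …, i_k]` of indices,
namely the product `s_{i₁} s_{i₂} ⋯ s_{i_k}`. -/
def wprod (l : List ℕ) : Equiv.Perm ℕ := (l.map st).prod

/-- `σ` belongs to the symmetric group `S_n` on `{1, …, n}`:
it fixes `0` and every `m > n`. -/
def MemS (n : ℕ) (σ : Equiv.Perm ℕ) : Prop := ∀ m : ℕ, m < 1 ∨ n < m → σ m = m

/-- The Coxeter length `ℓ(σ)`: the minimal number of simple transpositions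
`s_i` (`i ≥ 1`) in an expression of `σ` as their product. -/
noncomputable def len (σ : Equiv.Perm ℕ) : ℕ :=
  sInf {k : ℕ | ∃ l : List ℕ, (∀ i ∈ l, 1 ≤ i) ∧ l.length = k ∧ wprod l = σ}

/-- `l` is a reduced word: a word in the `s_i` (`i ≥ 1`) whose number of letters
equals the length of the permutation it represents. -/
def Reduced (l : List ℕ) : Prop := (∀ i ∈ l, 1 ≤ i) ∧ l.length = len (wprod l)

/-- Bruhat order, characterized by the subword property: `u ≤ v` iff some
(equivalently, every) reduced expression of `v` has a subword (sublist) that is a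
reduced expression of `u`. -/
def BruhatLE (u v : Equiv.Perm ℕ) : Prop :=
  ∃ l : List ℕ, Reduced l ∧ wprod l = v ∧
    ∃ l' : List ℕ, l'.Sublist l ∧ Reduced l' ∧ wprod l' = u

/-- `s_i ∈ D_R(σ)`, i.e. `σ(i) > σ(i+1)`. -/
def DR (σ : Equiv.Perm ℕ) (i : ℕ) : Prop := σ (i + 1) < σ i

/-- The word `Ω_n = s_2 s_1 s_3 s_2 s_4 s_3 ⋯ s_{n-1} s_{n-2}`,
the concatenation of the blocks `s_j s_{j-1}` for `j = 2, …, n-1`. -/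
def Omega (n : ℕ) : List ℕ := (List.range (n - 2)).flatMap fun j => [j + 2, j + 1]

/-- `d(ω)`: the number of indices `1 ≤ t < k` with `i_t - i_{t+1} = 1`,
for a word `ω = s_{i₁} ⋯ s_{i_k}`. -/
def dstat (l : List ℕ) : ℕ := (l.zip l.tail).countP fun p => p.1 == p.2 + 1

/-- `v` is the permutation of `S_n` with one-line notation `3 4 ⋯ n 1 2`. -/
def IsVn (n : ℕ) (v : Equiv.Perm ℕ) : Prop :=
  (∀ i : ℕ, 1 ≤ i → i ≤ n - 2 → v i = i + 2) ∧ v (n - 1) = 1 ∧ v n = 2 ∧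
    ∀ m : ℕ, m < 1 ∨ n < m → v m = m

/-! ### Simple transpositions and words -/

lemma wprod_concat (l : List ℕ) (k : ℕ) : wprod (l ++ [k]) = wprod l * st k := by
  simp [wprod]

lemma st_mul_self (k : ℕ) : st k * st k = 1 := by
  simp [st]

lemma st_left (k : ℕ) : st k k = k + 1 := by simp [st]

lemma st_right (k : ℕ) : st k (k + 1) = k := by simp [st]

lemma st_of_ne {k a : ℕ} (h : a ≠ k) (h' : a ≠ k + 1) : st k a = a :=
  Equiv.swap_apply_of_ne_of_ne h h'

lemma st_braid (k : ℕ) :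
    st (k + 1) * (st k * st (k + 1)) = st k * (st (k + 1) * st k) := by
  ext a
  simp only [Equiv.Perm.mul_apply, st, Equiv.swap_apply_def]
  split_ifs <;> omega

/-! ### Length, descents and the exchange property -/

lemma len_le {l : List ℕ} (h : ∀ i ∈ l, 1 ≤ i) : len (wprod l) ≤ l.length :=
  Nat.sInf_le ⟨l, h, rfl, rfl⟩

/-- An element with at least one expression has one of length `len`. -/
lemma exists_reduced {l : List ℕ} (h : ∀ i ∈ l, 1 ≤ i) :
    ∃ r : List ℕ, Reduced r ∧ wprod r = wprod l := by
  have hne : {k : ℕ | ∃ r : List ℕ, (∀ i ∈ r, 1 ≤ i) ∧ r.length = k ∧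
      wprod r = wprod l}.Nonempty := ⟨l.length, l, h, rfl, rfl⟩
  obtain ⟨r, hr, hlen, hprod⟩ := Nat.sInf_mem hne
  exact ⟨r, ⟨hr, by rw [hprod]; exact hlen⟩, hprod⟩

/-- Exchange property: if `s_k` is a descent of the element represented by `l`, then
multiplying it by `s_k` gives an element with an expression one letter shorter than `l`. -/
lemma exchange (k : ℕ) (l : List ℕ) (h1 : ∀ i ∈ l, 1 ≤ i) (h : DR (wprod l) k) :
    ∃ l' : List ℕ, (∀ i ∈ l', 1 ≤ i) ∧ l'.length + 1 = l.length ∧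
      wprod l' = wprod l * st k := by
  induction l with
  | nil => simp [DR, wprod] at h
  | cons i t ih =>
    have hcons : ∀ t : List ℕ, wprod (i :: t) = st i * wprod t := fun t => by simp [wprod]
    have ht : ∀ j ∈ t, 1 ≤ j := fun j hj => h1 j (List.mem_cons_of_mem _ hj)
    by_cases hd : DR (wprod t) k
    · obtain ⟨t', h2, h3, h4⟩ := ih ht hd
      refine ⟨i :: t', ?_, by simp [h3], by rw [hcons, hcons, h4, mul_assoc]⟩
      intro j hj
      rcases List.mem_cons.1 hj with rfl | hj
      · exact h1 _ List.mem_cons_self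
      · exact h2 j hj
    · -- Left multiplication by `s_i` creates the descent only if it swaps the values
      -- `i`, `i + 1` standing in positions `k`, `k + 1`, i.e. if `s_i τ = τ s_k`.
      have hne : wprod t k ≠ wprod t (k + 1) := fun e => by
        have := (wprod t).injective e
        omega
      have hk : wprod t k = i ∧ wprod t (k + 1) = i + 1 := by
        simp only [DR, hcons, Equiv.Perm.mul_apply, st, Equiv.swap_apply_def] at h hd
        split_ifs at h <;> omega
      refine ⟨t, ht, by simp, ?_⟩
      have hcomm : st i * wprod t = wprod t * st k := by
        have := Equiv.mul_swap_eq_swap_mul (wprod t) k (k + 1)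
        rw [hk.1, hk.2] at this
        exact this.symm
      rw [hcons, hcomm, mul_assoc, st_mul_self, mul_one]

/-- A reduced word stays reduced without its last letter, which is not a descent of the
element represented by the remaining letters. -/
lemma Reduced.of_concat {l : List ℕ} {k : ℕ} (h : Reduced (l ++ [k])) :
    Reduced l ∧ wprod l k < wprod l (k + 1) := by
  obtain ⟨h1, hlen⟩ := h
  have hl : ∀ i ∈ l, 1 ≤ i := fun i hi => h1 i (List.mem_append_left _ hi)
  have hk : 1 ≤ k := h1 k (by simp)
  rw [List.length_append, List.length_singleton] at hlen
  refine ⟨⟨hl, ?_⟩, ?_⟩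
  · obtain ⟨r, ⟨hr, hrlen⟩, hrp⟩ := exists_reduced hl
    have : len (wprod (r ++ [k])) ≤ (r ++ [k]).length := len_le (by
      intro i hi
      rcases List.mem_append.1 hi with hi | hi
      · exact hr i hi
      · simp at hi; omega)
    rw [wprod_concat, hrp, ← wprod_concat, ← hlen, List.length_append,
      List.length_singleton, hrlen, hrp] at this
    have := len_le hl
    omega
  · by_contra hcon
    have hne : wprod l k ≠ wprod l (k + 1) := fun e => by
      have := (wprod l).injective e
      omega
    obtain ⟨l', h2, h3, h4⟩ := exchange k l hl (by unfold DR; omega)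
    have := len_le h2
    rw [h4, ← wprod_concat] at this
    omega

/-- Right multiplication by a non-descent raises the length. -/
lemma len_mul_st {l : List ℕ} {k : ℕ} (hk : 1 ≤ k) (h : Reduced l)
    (ha : wprod l k < wprod l (k + 1)) : l.length + 1 ≤ len (wprod l * st k) := by
  obtain ⟨h1, hlen⟩ := h
  have hlk : ∀ i ∈ l ++ [k], 1 ≤ i := by
    intro i hi
    rcases List.mem_append.1 hi with hi | hi
    · exact h1 i hi
    · simp at hi; omega
  obtain ⟨r, ⟨hr, hrlen⟩, hrp⟩ := exists_reduced hlk
  obtain ⟨r', h2, h3, h4⟩ := exchange k r hr (by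
    rw [hrp, wprod_concat]
    simpa [DR, st_left, st_right] using ha)
  have := len_le h2
  rw [h4, hrp, wprod_concat, mul_assoc, st_mul_self, mul_one] at this
  rw [← wprod_concat, ← hrp, ← hrlen]
  omega

/-! ### Bruhat order and lower bounds -/

/-- A lower bound of one-line notation by a monotone function passes to Bruhat-smaller elements.
In the induction on the reduced word, removing the last letter `s_k` allows the bound at `k` to be
raised to `g (k + 1)`. -/
lemma lower_bound_of_sublist (l : List ℕ) : ∀ (l' : List ℕ) (g : ℕ → ℕ), Reduced l →
    l'.Sublist l → Monotone g → (∀ a, g a ≤ wprod l a) → ∀ a, g a ≤ wprod l' a := by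
  induction l using List.reverseRecOn with
  | nil =>
    intro l' g _ hs _ hg
    rw [List.sublist_nil.1 hs]
    exact hg
  | append_singleton m k ih =>
    intro l' g hred hs hmono hg
    obtain ⟨hm, hasc⟩ := hred.of_concat
    have hgk : g k ≤ g (k + 1) := hmono (Nat.le_succ k)
    let g' : ℕ → ℕ := fun a => if a = k then g (k + 1) else g a
    have hg'mono : Monotone g' := by
      apply monotone_nat_of_le_succ
      intro a
      have := hmono (Nat.le_succ a)
      by_cases h1 : a = k
      · subst h1; simp [g']
      · by_cases h2 : a + 1 = k
        · simp only [g', h1, h2, if_true, if_false]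
          exact hmono (by omega)
        · simpa [g', h1, h2] using this
    have hbound : ∀ a, g' a ≤ wprod m a := by
      intro a
      have e1 := hg (k + 1)
      rw [wprod_concat, Equiv.Perm.mul_apply, st_right] at e1
      by_cases h1 : a = k
      · subst h1; simpa [g'] using e1
      · by_cases h2 : a = k + 1
        · subst h2
          simp only [g', h1, if_false]
          omega
        · have := hg a
          rw [wprod_concat, Equiv.Perm.mul_apply, st_of_ne h1 h2] at this
          simpa [g', h1] using this
    obtain ⟨m', t, rfl, hm', ht⟩ := List.sublist_append_iff.1 hs
    have hm'g := ih m' g' hm hm' hg'mono hbound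
    have hk0 : g (k + 1) ≤ wprod m' k := by simpa [g'] using hm'g k
    have hk1 : g (k + 1) ≤ wprod m' (k + 1) := by simpa [g'] using hm'g (k + 1)
    rcases List.sublist_singleton.1 ht with rfl | rfl
    · intro a
      rw [List.append_nil]
      by_cases h1 : a = k
      · subst h1; omega
      · simpa [g', h1] using hm'g a
    · intro a
      rw [wprod_concat, Equiv.Perm.mul_apply]
      by_cases h1 : a = k
      · subst h1; rw [st_left]; omega
      · by_cases h2 : a = k + 1
        · subst h2; rw [st_right]; exact hk0
        · rw [st_of_ne h1 h2]
          simpa [g', h1] using hm'g a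

/-! ### The word `Ω_n` and the statistic `d` -/

lemma Omega_succ (m : ℕ) : Omega (m + 3) = Omega (m + 2) ++ [m + 2, m + 1] := by
  simp [Omega, List.range_succ]

lemma mem_Omega {m i : ℕ} (h : i ∈ Omega (m + 2)) : 1 ≤ i ∧ i ≤ m + 1 := by
  simp only [Omega, List.mem_flatMap, List.mem_range, List.mem_cons, List.not_mem_nil,
    or_false] at h
  omega

lemma dstat_cons_cons (a b : ℕ) (l : List ℕ) :
    dstat (a :: b :: l) = dstat (b :: l) + if a = b + 1 then 1 else 0 := by
  simp [dstat, List.countP_cons]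

lemma dstat_concat {l : List ℕ} {k : ℕ} (h : k + 1 ∉ l) : dstat (l ++ [k]) = dstat l := by
  induction l with
  | nil => simp [dstat]
  | cons a t ih =>
    have ih := ih fun h' => h (List.mem_cons_of_mem _ h')
    have ha : a ≠ k + 1 := fun e => h (e ▸ List.mem_cons_self)
    cases t with
    | nil => simp [dstat, ha]
    | cons b t =>
      simp only [List.cons_append] at ih ⊢
      rw [dstat_cons_cons, dstat_cons_cons, ih]

lemma dstat_concat_pair (l : List ℕ) (k : ℕ) :
    dstat (l ++ [k + 1, k]) = dstat (l ++ [k + 1]) + 1 := by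
  induction l with
  | nil => simp [dstat]
  | cons a t ih =>
    cases t with
    | nil => simp [dstat, List.countP_cons]; omega
    | cons b t =>
      simp only [List.cons_append] at ih ⊢
      rw [dstat_cons_cons, dstat_cons_cons, ih]
      omega

/-! ### The induction on `n` -/

/-- The inductive form of the claim, with `n = m + 2` and with the Bruhat condition weakened to
`σ(n-1) ≠ 1`. -/
lemma exists_word (m : ℕ) : ∀ ω : List ℕ, ω.Sublist (Omega (m + 2)) → Reduced ω →
    wprod ω (m + 1) < wprod ω (m + 2) → wprod ω (m + 1) ≠ 1 →
    ∃ ω' : List ℕ, ω'.Sublist (Omega (m + 2)) ∧ ω'.length = ω.length + 1 ∧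
      wprod ω' = wprod ω * st (m + 1) ∧ dstat ω' = dstat ω := by
  induction m with
  | zero =>
    intro ω hs _ _ h1
    have : ω = [] := by simpa [Omega] using hs
    subst this
    simp [wprod] at h1
  | succ m ih =>
    intro ω hs hred hasc h1
    have hnot : ∀ {l : List ℕ}, l.Sublist (Omega (m + 2)) → ∀ j, m + 1 < j → j ∉ l :=
      fun hl j hj hjl => by
        have := (mem_Omega (hl.subset hjl)).2
        omega
    rw [show m + 1 + 2 = m + 3 from rfl, Omega_succ] at hs ⊢
    rw [show m + 1 + 1 = m + 2 from rfl] at *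
    rw [show m + 1 + 2 = m + 3 from rfl] at hasc
    obtain ⟨α, t, rfl, hα, ht⟩ := List.sublist_append_iff.1 hs
    have ht' : t = [] ∨ t = [m + 2] ∨ t = [m + 1] ∨ t = [m + 2, m + 1] := by
      rw [← List.mem_sublists] at ht
      simpa [List.sublists] using ht
    rcases ht' with rfl | rfl | rfl | rfl
    · refine ⟨α ++ [m + 2], hα.append (by simp), by simp, by simp [wprod_concat], ?_⟩
      rw [List.append_nil]
      exact dstat_concat (hnot hα _ (by omega))
    · have := hred.of_concat.2
      rw [wprod_concat, Equiv.Perm.mul_apply, Equiv.Perm.mul_apply, st_left, st_right] at hasc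
      omega
    · obtain ⟨hαred, hαasc⟩ := hred.of_concat
      obtain ⟨α', h2, h3, h4, h5⟩ := ih α hα hαred hαasc (by
        simpa [wprod_concat, st_right] using h1)
      refine ⟨α' ++ [m + 2], h2.append (by simp), by simp [h3], ?_, ?_⟩
      · rw [wprod_concat, wprod_concat, h4]
      · rw [dstat_concat (hnot h2 _ (by omega)), dstat_concat (hnot hα _ (by omega)), h5]
    · have hred' : Reduced ((α ++ [m + 2]) ++ [m + 1]) := by simpa using hred
      have hαred := hred'.of_concat.1.of_concat.1
      have hprod : ∀ β : List ℕ,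
          wprod (β ++ [m + 2, m + 1]) = wprod β * (st (m + 2) * st (m + 1)) := fun β => by
        simp [wprod]
      have e1 : wprod (α ++ [m + 2, m + 1]) (m + 2) = wprod α (m + 1) := by
        rw [hprod, Equiv.Perm.mul_apply, Equiv.Perm.mul_apply, st_right,
          st_of_ne (by omega) (by omega)]
      have e2 : wprod (α ++ [m + 2, m + 1]) (m + 3) = wprod α (m + 2) := by
        rw [hprod, Equiv.Perm.mul_apply, Equiv.Perm.mul_apply,
          st_of_ne (k := m + 1) (by omega) (by omega), st_right]
      rw [e1] at h1 hasc
      rw [e2] at hasc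
      obtain ⟨α', h2, h3, h4, h5⟩ := ih α hα hαred hasc h1
      refine ⟨α' ++ [m + 2, m + 1], h2.append (List.Sublist.refl _), by simp [h3], ?_, ?_⟩
      · rw [hprod, hprod, h4, mul_assoc, mul_assoc, mul_assoc, ← st_braid]
      · rw [dstat_concat_pair, dstat_concat_pair, dstat_concat (hnot h2 _ (by omega)),
          dstat_concat (hnot hα _ (by omega)), h5]

/-- Let `ω` be a reduced subword of `Ω_n` and `σ` the permutation it represents.
If `σ s_{n-1} ≤ v_n` in the Bruhat order and `s_{n-1} ∉ D_R(σ)`, then there is a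
reduced expression `ω'` of `σ s_{n-1}` which is a subword of `Ω_n` with
`d(ω') = d(ω)`. -/
theorem lemma2 (n : ℕ) (hn : 3 ≤ n) (v : Equiv.Perm ℕ) (hv : IsVn n v)
    (ω : List ℕ) (hsub : ω.Sublist (Omega n)) (hred : Reduced ω)
    (hble : BruhatLE (wprod ω * st (n - 1)) v)
    (hdes : ¬ DR (wprod ω) (n - 1)) :
    ∃ ω' : List ℕ, Reduced ω' ∧ wprod ω' = wprod ω * st (n - 1) ∧
      ω'.Sublist (Omega n) ∧ dstat ω' = dstat ω := by
  obtain ⟨m, rfl⟩ : ∃ m, n = m + 2 := ⟨n - 2, by omega⟩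
  have hsucc : m + 2 - 1 = m + 1 := by omega
  rw [hsucc] at hble hdes ⊢
  have hne : wprod ω (m + 1) ≠ wprod ω (m + 2) := fun e => by
    have := (wprod ω).injective e
    omega
  have hasc : wprod ω (m + 1) < wprod ω (m + 2) := by
    change ¬ wprod ω (m + 2) < wprod ω (m + 1) at hdes
    omega
  obtain ⟨l, hl, hlv, l', hl', -, hlu⟩ := hble
  have hbound := lower_bound_of_sublist l l' (fun a => if m + 2 ≤ a then 2 else 0) hl hl'
    (by
      intro a b hab
      dsimp only
      split_ifs <;> omega)
    (by
      intro a
      rw [hlv]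
      split_ifs with ha
      · rcases Nat.lt_or_ge (m + 2) a with h | h
        · rw [hv.2.2.2 a (Or.inr h)]
          omega
        · rw [le_antisymm h ha, hv.2.2.1]
      · exact Nat.zero_le _) (m + 2)
  rw [hlu, Equiv.Perm.mul_apply, st_right, if_pos le_rfl] at hbound
  obtain ⟨ω', h2, h3, h4, h5⟩ := exists_word m ω hsub hred hasc (by omega)
  have h1 : ∀ i ∈ ω', 1 ≤ i := fun i hi => (mem_Omega (h2.subset hi)).1
  refine ⟨ω', ⟨h1, ?_⟩, h4, h2, h5⟩
  have hlen := len_mul_st (k := m + 1) (by omega) hred hasc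
  have := len_le h1
  rw [h4] at this ⊢
  omega
end

section
/- Let n ≥ 3 and let π ∈ S_n satisfy π ≤ v_n s_{n−2} in the Bruhat order, where v_n s_{n−2} is the permutation with one-line notation 3 4 ⋯ (n−1) 1 n 2. If π(n) ≠ n, then s_{n−2} ∉ D_R(π); that is, π(n−2) < π(n−1). -/
lemma wprod_nil : wprod [] = 1 := rfl

lemma wprod_cons (i : ℕ) (l : List ℕ) : wprod (i :: l) = st i * wprod l := by
  simp [wprod]

lemma wprod_append (l₁ l₂ : List ℕ) : wprod (l₁ ++ l₂) = wprod l₁ * wprod l₂ := by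
  simp [wprod]

lemma st_inv (i : ℕ) : (st i)⁻¹ = st i := by
  simp [st]

lemma wprod_cons_inv_apply (i : ℕ) (l : List ℕ) (x : ℕ) :
    (wprod (i :: l))⁻¹ x = (wprod l)⁻¹ (st i x) := by
  rw [wprod_cons, mul_inv_rev, st_inv, Equiv.Perm.mul_apply]

lemma wprod_append_inv_apply (l₁ l₂ : List ℕ) (x : ℕ) :
    (wprod (l₁ ++ l₂))⁻¹ x = (wprod l₂)⁻¹ ((wprod l₁)⁻¹ x) := by
  rw [wprod_append, mul_inv_rev, Equiv.Perm.mul_apply]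

lemma st_apply (i x : ℕ) :
    st i x = if x = i then i + 1 else if x = i + 1 then i else x := by
  rw [st, Equiv.swap_apply_def]

/-- If a word reverses the relative order of the positions `x < y`, then some letter of it
exchanges the two strands starting there. -/
lemma exists_crossing (l : List ℕ) (x y : ℕ) (hxy : x < y)
    (h : (wprod l)⁻¹ y < (wprod l)⁻¹ x) :
    ∃ l₁ i l₂, l = l₁ ++ i :: l₂ ∧ (wprod l₁)⁻¹ x = i ∧ (wprod l₁)⁻¹ y = i + 1 := by
  induction l generalizing x y with
  | nil => simp [wprod_nil] at h; omega
  | cons j l ih =>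
    by_cases hj : x = j ∧ y = j + 1
    · exact ⟨[], j, l, rfl, by simp [wprod_nil, hj.1], by simp [wprod_nil, hj.2]⟩
    · rw [wprod_cons_inv_apply, wprod_cons_inv_apply] at h
      have hlt : st j x < st j y := by
        rw [st_apply, st_apply]
        split_ifs <;> omega
      obtain ⟨l₁, i, l₂, rfl, h₁, h₂⟩ := ih _ _ hlt h
      exact ⟨j :: l₁, i, l₂, rfl, by rw [wprod_cons_inv_apply, h₁],
        by rw [wprod_cons_inv_apply, h₂]⟩

lemma Reduced.length_le {l : List ℕ} (h : Reduced l) (m : List ℕ) (hm : ∀ i ∈ m, 1 ≤ i)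
    (he : wprod m = wprod l) : l.length ≤ m.length := by
  rw [h.2]
  exact Nat.sInf_le ⟨m, hm, rfl, he⟩

/-- If the letters `i` and `j` around `M` exchange the same two strands, both can be deleted. -/
lemma st_mul_wprod_mul_st (i j : ℕ) (M : Equiv.Perm ℕ)
    (h₁ : M⁻¹ i = j) (h₂ : M⁻¹ (i + 1) = j + 1) : st i * M * st j = M := by
  have h : st j = M⁻¹ * st i * M := by
    have := Equiv.mul_swap_eq_swap_mul M j (j + 1)
    have e₁ : M j = i := by rw [← h₁]; simp
    have e₂ : M (j + 1) = i + 1 := by rw [← h₂]; simp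
    rw [e₁, e₂] at this
    rw [st, st, mul_assoc, ← this]; simp
  have hs : st i * st i = 1 := by simp [st]
  rw [h]
  calc st i * M * (M⁻¹ * st i * M) = (st i * st i) * M := by group
    _ = M := by rw [hs, one_mul]

/-- Along a reduced word, an inversion once created is never undone. -/
lemma inverted_stays (A B C : List ℕ) (hred : Reduced (A ++ B ++ C)) (a b : ℕ) (hab : a < b)
    (hA : (wprod A)⁻¹ b < (wprod A)⁻¹ a) :
    (wprod (A ++ B))⁻¹ b < (wprod (A ++ B))⁻¹ a := by
  by_contra hcon
  have hne : (wprod (A ++ B))⁻¹ b ≠ (wprod (A ++ B))⁻¹ a := fun h =>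
    hab.ne' ((wprod (A ++ B))⁻¹.injective h)
  have hlt : (wprod (A ++ B))⁻¹ a < (wprod (A ++ B))⁻¹ b := by omega
  rw [wprod_append_inv_apply, wprod_append_inv_apply] at hlt
  obtain ⟨A₁, i, A₂, rfl, ha, hb⟩ := exists_crossing A a b hab hA
  obtain ⟨B₁, j, B₂, rfl, hb', ha'⟩ := exists_crossing B _ _ hA hlt
  rw [wprod_append_inv_apply, wprod_cons_inv_apply, ← wprod_append_inv_apply] at hb' ha'
  rw [hb, st_apply, if_neg (by omega), if_pos rfl] at hb'
  rw [ha, st_apply, if_pos rfl] at ha'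
  have hM := st_mul_wprod_mul_st i j _ hb' ha'
  have hle := hred.length_le (A₁ ++ (A₂ ++ B₁) ++ (B₂ ++ C))
    (fun k hk => hred.1 k (by simp at hk ⊢; tauto)) (by
      have e : A₁ ++ i :: A₂ ++ (B₁ ++ j :: B₂) ++ C
          = A₁ ++ (i :: (A₂ ++ B₁) ++ [j]) ++ (B₂ ++ C) := by simp
      have e' : wprod (i :: (A₂ ++ B₁) ++ [j]) = wprod (A₂ ++ B₁) := by
        rw [wprod_append (i :: _), wprod_cons, wprod_cons, wprod_nil, mul_one, hM]
      rw [e, wprod_append (A₁ ++ _), wprod_append A₁, wprod_append (A₁ ++ _), wprod_append A₁, e'])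
  simp at hle

/-- No letter of the word `l` moves the strand starting at position `x` to the right: the letter
following a prefix `A` is never the current position `(wprod A)⁻¹ x` of that strand. -/
def NeverUp (l : List ℕ) (x : ℕ) : Prop :=
  ∀ A i B, l = A ++ i :: B → (wprod A)⁻¹ x ≠ i

/-- A strand that never moves right ends weakly to the left of any strand of any subword
that starts weakly to its right. -/
lemma NeverUp.le_of_sublist {l l' : List ℕ} (hs : l'.Sublist l) (x y : ℕ) (h : NeverUp l x)
    (hxy : x ≤ y) : (wprod l)⁻¹ x ≤ (wprod l')⁻¹ y := by
  have tail : ∀ {i : ℕ} {l : List ℕ} {x : ℕ}, NeverUp (i :: l) x → NeverUp l (st i x) := by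
    intro i l x h A k B he
    rw [← wprod_cons_inv_apply]
    exact h (i :: A) k B (by rw [he]; rfl)
  have head : ∀ {i : ℕ} {l : List ℕ} {x : ℕ}, NeverUp (i :: l) x → x ≠ i := by
    intro i l x h
    simpa [wprod_nil] using h [] i l rfl
  induction hs generalizing x y with
  | slnil => simpa [wprod_nil] using hxy
  | cons i hs ih =>
    rw [wprod_cons_inv_apply]
    have := head h
    refine ih _ _ (tail h) ?_
    rw [st_apply]
    split_ifs <;> omega
  | cons_cons i hs ih =>
    rw [wprod_cons_inv_apply, wprod_cons_inv_apply]
    have := head h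
    refine ih _ _ (tail h) ?_
    rw [st_apply, st_apply]
    split_ifs <;> omega

/-- Let `σ ∈ S_n` with `σ ≤ v_n s_{n-2}` (one-line notation `3 4 ⋯ (n-1) 1 n 2`)
in the Bruhat order. If `σ(n) ≠ n`, then `s_{n-2} ∉ D_R(σ)`, that is,
`σ(n-2) < σ(n-1)`. -/
theorem not_descent_of_le (n : ℕ) (hn : 3 ≤ n) (v : Equiv.Perm ℕ) (hv : IsVn n v)
    (σ : Equiv.Perm ℕ) (hσ : MemS n σ)
    (h : BruhatLE σ (v * st (n - 2)))
    (hne : σ n ≠ n) :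
    σ (n - 2) < σ (n - 1) := by
  obtain ⟨l, hred, hl, l', hsub, -, hl'⟩ := h
  have hwn : (wprod l)⁻¹ n = n - 1 := by
    rw [Equiv.Perm.inv_eq_iff_eq, hl, Equiv.Perm.mul_apply, st_apply, if_neg (by omega),
      if_pos (by omega), hv.1 _ (by omega) le_rfl]
    omega
  have hwb : ∀ b, n < b → (wprod l)⁻¹ b = b := by
    intro b hb
    rw [Equiv.Perm.inv_eq_iff_eq, hl, Equiv.Perm.mul_apply, st_apply, if_neg (by omega),
      if_neg (by omega), hv.2.2.2 b (Or.inr hb)]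
  have hup : NeverUp l n := by
    intro A i B he hi
    -- `b` is the value that the letter `i` exchanges with `n`.
    obtain ⟨b, hb⟩ : ∃ b, (wprod A)⁻¹ b = i + 1 := (wprod A)⁻¹.surjective _
    have hn' : (wprod (A ++ [i]))⁻¹ n = i + 1 := by
      rw [wprod_append_inv_apply, hi, wprod_cons_inv_apply, st_apply, if_pos rfl]; rfl
    have hb' : (wprod (A ++ [i]))⁻¹ b = i := by
      rw [wprod_append_inv_apply, hb, wprod_cons_inv_apply, st_apply, if_neg (by omega),
        if_pos rfl]; rfl
    have hl₂ : l = (A ++ [i]) ++ B := by simp [he]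
    rcases lt_trichotomy b n with hlt | heq | hgt
    · have := inverted_stays A [i] B (hl₂ ▸ hred) b n hlt (by omega)
      omega
    · rw [heq] at hb; omega
    · have := inverted_stays (A ++ [i]) B [] (by simpa [he] using hred) n b hgt (by omega)
      rw [← hl₂, hwn, hwb b hgt] at this
      omega
  have hge : n - 1 ≤ σ⁻¹ n := by
    rw [← hwn, ← hl']
    exact hup.le_of_sublist hsub n n le_rfl
  have hσσ : σ (σ⁻¹ n) = n := by simp
  have hle : σ⁻¹ n ≤ n := by
    by_contra hc
    have := hσ (σ⁻¹ n) (Or.inr (by omega))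
    omega
  have hne' : σ⁻¹ n ≠ n := fun hc => hne (by rw [hc] at hσσ; exact hσσ)
  have hval : σ (n - 1) = n := by
    rw [show n - 1 = σ⁻¹ n by omega, hσσ]
  rw [hval]
  have h₁ : σ (n - 2) ≠ n := by
    intro hc
    have := σ.injective (hc.trans hval.symm)
    omega
  have h₂ : ¬ n < σ (n - 2) := by
    intro hc
    have := σ.injective (hσ (σ (n - 2)) (Or.inr hc))
    omega
  omega
end
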